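/- Fix an integer u ≥ 0. If ν assigns a nonnegative real number to each isomorphism class of finite abelian p-groups and for every finite abelian p-group A one has ∑_B |Sur(B,A)| · ν(B) = |A|^{-u} (sum over isomorphism classes of finite abelian p-groups B), then ν(B) = μ^u(B) for every finite abelian p-group B. -/

import Mathlib

/-!
Cohen–Lenstra moments: for every integer `u ≥ 0` and every finite abelian `p`-group `A`,
the sum over isomorphism classes of finite abelian `p`-groups `B` of `|Sur(B,A)| · μ^u(B)`
equals `|A|^{-u}`.
-/

open scoped Classical

/-- The number of surjective group homomorphisms `B → A`. -/
noncomputable def numSur (B A : Type*) [AddCommGroup B] [AddCommGroup A] : ℕ :=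
  Nat.card {f : B →+ A // Function.Surjective f}

/-- The number of automorphisms of `A`. -/
noncomputable def numAut (A : Type*) [AddCommGroup A] : ℕ :=
  Nat.card (A ≃+ A)

/-- The infinite product `∏_{k=1}^∞ (1 - p^{-(k+u)})`. -/
noncomputable def clProd (p u : ℕ) : ℝ :=
  ∏' k : ℕ, (1 - (p : ℝ) ^ (-((k : ℤ) + 1 + u)))

/-- The Cohen–Lenstra measure `μ^u(A) = |A|^{-u} |Aut(A)|^{-1} ∏_{k=1}^∞ (1 - p^{-(k+u)})`. -/
noncomputable def clMeasure (p u : ℕ) (A : Type*) [AddCommGroup A] : ℝ :=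
  ((Nat.card A : ℝ) ^ u)⁻¹ * ((numAut A : ℝ))⁻¹ * clProd p u

/-- The finite abelian `p`-group `G_λ = ⨁_i ℤ/p^{λ_i}ℤ` associated to a partition `λ`,
a finite multiset of positive integers. -/
def CLGroup (p : ℕ) (lam : Multiset ℕ+) : Type :=
  ∀ i : Fin lam.toList.length, ZMod (p ^ ((lam.toList.get i : ℕ+) : ℕ))

noncomputable instance (p : ℕ) (lam : Multiset ℕ+) : AddCommGroup (CLGroup p lam) := by
  delta CLGroup; infer_instance

/-!
Choose a free presentation `j : Q ↠ B`. Each `h : ker j → V` yields by pushout an extension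
`C_h` of `B` by `V`, of order `|B| |V|`. For `V` finite, summing `|Sur(X, C_h)|` over all `h`
counts `|Hom(Q, V)| = |Hom(ker j, V)|` times the pairs of a surjection `φ : X → B` and a
surjection `ker φ → V`: given `φ`, a lift of `j` through `φ` splits the fibre product `Q ×_B X` as
`Q × ker φ`. So the moments of `ν` at groups of order `|B| |V|` give the `ν`-weighted number of such
pairs.

For `V = 𝔽_p^k`, the number of surjections `ker φ → V` is `∏_{i<k} (p^r - p^i)`, where `r` is the
`p`-rank of `ker φ`. The alternating sum over `k` of these numbers, weighted by
`∏_{i=1}^k (p^i - 1)⁻¹`, is the indicator of `r = 0`, that is, of `φ` being an isomorphism, and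
truncating it costs at most the first omitted term. As `ν` is nonnegative, this bound can be
summed against `ν`, and `∑_X |Iso(X, B)| ν(X) = |Aut B| ν(B)` is the corresponding alternating
series in the moments, which Euler's product expansion sums to
`|B|^{-u} ∏_{k≥1} (1 - p^{-(k+u)})`.
-/

open Filter Finset Function Topology

namespace CohenLenstra

section EulerExpansion

/-- The coefficient `∏_{i=1}^k (q^i - 1)⁻¹` of `y^k` in Euler's expansion of
`∏_{i≥1} (1 + y q^{-i})`. -/
noncomputable def eulerCoeff (q : ℝ) (k : ℕ) : ℝ := (∏ i ∈ range k, (q ^ (i + 1) - 1))⁻¹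

variable {q : ℝ} (hq : 1 < q)

@[simp]
lemma eulerCoeff_zero (q : ℝ) : eulerCoeff q 0 = 1 := by simp [eulerCoeff]

include hq in
lemma eulerCoeff_pos (k : ℕ) : 0 < eulerCoeff q k :=
  inv_pos.2 <| prod_pos fun i _ => sub_pos.2 (one_lt_pow₀ hq i.succ_ne_zero)

include hq in
lemma eulerCoeff_eq_succ_mul (k : ℕ) :
    eulerCoeff q k = eulerCoeff q (k + 1) * (q ^ (k + 1) - 1) := by
  have hk : q ^ (k + 1) - 1 ≠ 0 := (sub_pos.2 (one_lt_pow₀ hq k.succ_ne_zero)).ne'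
  rw [eulerCoeff, eulerCoeff, prod_range_succ, mul_inv, inv_mul_cancel_right₀ hk]

include hq in
lemma summable_eulerCoeff_mul_pow (y : ℝ) : Summable fun k => eulerCoeff q k * y ^ k := by
  rcases eq_or_ne y 0 with rfl | hy
  · exact summable_of_ne_finset_zero (s := {0}) fun k hk => by simp_all
  have hc k := (eulerCoeff_pos hq k).ne'
  refine summable_of_ratio_test_tendsto_lt_one zero_lt_one
    (.of_forall fun k => mul_ne_zero (hc k) (pow_ne_zero k hy)) ?_
  have hratio (k : ℕ) : ‖eulerCoeff q (k + 1) * y ^ (k + 1)‖ / ‖eulerCoeff q k * y ^ k‖ =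
      |y| * (q ^ (k + 1) - 1)⁻¹ := by
    have hk : 0 < q ^ (k + 1) - 1 := sub_pos.2 (one_lt_pow₀ hq k.succ_ne_zero)
    rw [eulerCoeff_eq_succ_mul hq k, ← norm_div, ← abs_of_pos (inv_pos.2 hk), ← abs_mul,
      Real.norm_eq_abs]
    congr 1
    have := hc (k + 1)
    field_simp
    ring
  simp_rw [hratio]
  have hpow : Tendsto (fun k : ℕ => q ^ (k + 1) - 1) atTop atTop :=
    tendsto_atTop_add_const_right _ _ <|
      (tendsto_pow_atTop_atTop_of_one_lt hq).comp (tendsto_add_atTop_nat 1)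
  simpa using hpow.inv_tendsto_atTop.const_mul |y|

include hq in
lemma tsum_eulerCoeff_mul_pow_eq_mul_div (y : ℝ) :
    ∑' k, eulerCoeff q k * y ^ k = (1 + y / q) * ∑' k, eulerCoeff q k * (y / q) ^ k := by
  have hq0 : q ≠ 0 := (zero_lt_one.trans hq).ne'
  have hy := summable_eulerCoeff_mul_pow hq y
  have hyq := summable_eulerCoeff_mul_pow hq (y / q)
  have hdiff : ∑' k, eulerCoeff q k * y ^ k - ∑' k, eulerCoeff q k * (y / q) ^ k =
      y / q * ∑' k, eulerCoeff q k * (y / q) ^ k := by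
    rw [← hy.tsum_sub hyq, (hy.sub hyq).tsum_eq_zero_add, ← tsum_mul_left]
    simp only [pow_zero, sub_self, zero_add]
    refine tsum_congr fun k => ?_
    rw [eulerCoeff_eq_succ_mul hq k, div_pow, div_pow]
    field_simp
    ring
  linarith

include hq in
lemma tsum_eulerCoeff_mul_pow_eq_prod_range_mul (y : ℝ) (n : ℕ) :
    ∑' k, eulerCoeff q k * y ^ k =
      (∏ k ∈ range n, (1 + y / q ^ (k + 1))) * ∑' k, eulerCoeff q k * (y / q ^ n) ^ k := by
  induction n with
  | zero => simp
  | succ n ih =>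
    rw [ih, tsum_eulerCoeff_mul_pow_eq_mul_div hq (y / q ^ n), prod_range_succ, div_div,
      ← pow_succ, mul_assoc]

include hq in
lemma tendsto_tsum_eulerCoeff_mul_div_pow (y : ℝ) :
    Tendsto (fun n : ℕ => ∑' k, eulerCoeff q k * (y / q ^ n) ^ k) atTop (𝓝 1) := by
  have hone : ∑' k, eulerCoeff q k * (0 : ℝ) ^ k = 1 := by
    rw [tsum_eq_single 0 fun k hk => by simp [hk]]
    simp
  rw [← hone]
  refine tendsto_tsum_of_dominated_convergence (summable_eulerCoeff_mul_pow hq |y|)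
    (fun k => (Tendsto.pow ?_ k).const_mul _) (.of_forall fun n k => ?_)
  · exact (tendsto_pow_atTop_atTop_of_one_lt hq).const_div_atTop y
  · have hqn : 1 ≤ q ^ n := one_le_pow₀ hq.le
    rw [norm_mul, norm_pow, norm_div, Real.norm_of_nonneg (eulerCoeff_pos hq k).le,
      Real.norm_of_nonneg (zero_le_one.trans hqn), Real.norm_eq_abs]
    gcongr
    · exact (eulerCoeff_pos hq k).le
    · exact div_le_self (abs_nonneg y) hqn

include hq in
/-- Iterate the functional equation `E(y) = (1 + y/q) E(y/q)` and use `E(y/q^n) → E(0) = 1`. -/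
theorem tsum_eulerCoeff_mul_pow (y : ℝ) :
    ∑' k, eulerCoeff q k * y ^ k = ∏' k : ℕ, (1 + y / q ^ (k + 1)) := by
  have hgeom : Summable fun k : ℕ => y / q ^ (k + 1) := by
    have hq' : ‖q⁻¹‖ < 1 := by
      simpa [abs_of_pos (zero_lt_one.trans hq)] using inv_lt_one_of_one_lt₀ hq
    refine ((summable_geometric_of_norm_lt_one hq').mul_left (y / q)).congr fun k => ?_
    rw [inv_pow, pow_succ', ← div_eq_mul_inv, div_div]
  have hprod := (Real.multipliable_one_add_of_summable hgeom).hasProd.tendsto_prod_nat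
  have hlim := hprod.mul (tendsto_tsum_eulerCoeff_mul_div_pow hq y)
  simp_rw [← tsum_eulerCoeff_mul_pow_eq_prod_range_mul hq y, mul_one] at hlim
  exact tendsto_nhds_unique tendsto_const_nhds hlim

end EulerExpansion

section Bonferroni

/-- `∏_{i<k} (x - q^i)`. At `x = q^r` with `q` a prime power this is the number of linearly
independent `k`-tuples in `𝔽_q^r`. -/
noncomputable def qFalling (q x : ℝ) (k : ℕ) : ℝ := ∏ i ∈ range k, (x - q ^ i)

lemma prod_range_pow_succ_sub_pow_succ (q : ℝ) (m k : ℕ) :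
    ∏ i ∈ range k, (q ^ (m + 1) - q ^ (i + 1)) = q ^ k * qFalling q (q ^ m) k := by
  have hfactor (i : ℕ) : q ^ (m + 1) - q ^ (i + 1) = q * (q ^ m - q ^ i) := by ring
  simp_rw [qFalling, hfactor, prod_mul_distrib, prod_const, card_range]

lemma qFalling_pow_succ_succ (q : ℝ) (m k : ℕ) :
    qFalling q (q ^ (m + 1)) (k + 1) = (q ^ (m + 1) - 1) * (q ^ k * qFalling q (q ^ m) k) := by
  rw [qFalling, prod_range_succ', prod_range_pow_succ_sub_pow_succ, pow_zero, mul_comm]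

lemma qFalling_pow_eq_zero (q : ℝ) {m k : ℕ} (h : m < k) : qFalling q (q ^ m) k = 0 :=
  prod_eq_zero (mem_range.2 h) (sub_self _)

lemma qFalling_pow_nonneg {q : ℝ} (hq : 1 ≤ q) (m k : ℕ) : 0 ≤ qFalling q (q ^ m) k := by
  rcases lt_or_ge m k with h | h
  · rw [qFalling_pow_eq_zero q h]
  · exact prod_nonneg fun i hi =>
      sub_nonneg.2 (pow_le_pow_right₀ hq ((mem_range.1 hi).le.trans h))

variable {q : ℝ} (hq : 1 < q)

include hq in
lemma sum_range_eulerCoeff_mul_qFalling (x : ℝ) (n : ℕ) :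
    ∑ k ∈ range (n + 1), (-1) ^ k * (eulerCoeff q k * qFalling q x k) =
      (-1) ^ n * (eulerCoeff q n * ∏ i ∈ range n, (x - q ^ (i + 1))) := by
  induction n with
  | zero => simp [qFalling]
  | succ n ih =>
    rw [sum_range_succ, ih, qFalling, prod_range_succ', prod_range_succ, pow_zero,
      eulerCoeff_eq_succ_mul hq n]
    ring

include hq in
theorem abs_sum_range_eulerCoeff_mul_qFalling_pow_sub_le (m n : ℕ) :
    |∑ k ∈ range (n + 1), (-1) ^ k * (eulerCoeff q k * qFalling q (q ^ m) k) -
        (if m = 0 then 1 else 0)| ≤ eulerCoeff q (n + 1) * qFalling q (q ^ m) (n + 1) := by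
  cases m with
  | zero =>
    rw [sum_range_succ', qFalling_pow_eq_zero q n.succ_pos,
      sum_eq_zero fun k _ => by rw [qFalling_pow_eq_zero q k.succ_pos, mul_zero, mul_zero]]
    simp [qFalling]
  | succ m =>
    rw [sum_range_eulerCoeff_mul_qFalling hq, prod_range_pow_succ_sub_pow_succ,
      if_neg m.succ_ne_zero, sub_zero, abs_mul, abs_neg_one_pow, one_mul, qFalling_pow_succ_succ]
    rcases lt_or_ge m n with h | h
    · simp [qFalling_pow_eq_zero q h]
    have hcoeff : eulerCoeff q n ≤ eulerCoeff q (n + 1) * (q ^ (m + 1) - 1) := by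
      rw [eulerCoeff_eq_succ_mul hq n]
      gcongr
      · exact (eulerCoeff_pos hq _).le
      · exact hq.le
    have hnonneg : 0 ≤ q ^ n * qFalling q (q ^ m) n :=
      mul_nonneg (pow_nonneg (zero_le_one.trans hq.le) n) (qFalling_pow_nonneg hq.le m n)
    rw [abs_of_nonneg (mul_nonneg (eulerCoeff_pos hq n).le hnonneg),
      ← mul_assoc (eulerCoeff q (n + 1))]
    exact mul_le_mul_of_nonneg_right hcoeff hnonneg

theorem hasSum_of_abs_sum_range_sub_le {ι : Type*} {f : ℕ → ι → ℝ} {g : ι → ℝ} {m : ℕ → ℝ}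
    {M : ℝ} (hf : ∀ k, HasSum (f k) (m k)) (hm : HasSum (fun k => (-1) ^ k * m k) M)
    (hfg : ∀ n i, |∑ k ∈ range (n + 1), (-1) ^ k * f k i - g i| ≤ f (n + 1) i) : HasSum g M := by
  have hpartial (n : ℕ) : HasSum (fun i => ∑ k ∈ range (n + 1), (-1) ^ k * f k i)
      (∑ k ∈ range (n + 1), (-1) ^ k * m k) := hasSum_sum fun k _ => (hf k).mul_left _
  have hdiff : Summable fun i => ∑ k ∈ range (0 + 1), (-1) ^ k * f k i - g i :=
    .of_norm_bounded (hf 1).summable (hfg 0)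
  have hg : Summable g := by simpa using (hpartial 0).summable.sub hdiff
  have hdist (n : ℕ) : dist (∑ k ∈ range (n + 1), (-1) ^ k * m k) (∑' i, g i) ≤ m (n + 1) := by
    rw [dist_eq_norm, ← ((hpartial n).sub hg.hasSum).tsum_eq]
    exact tsum_of_norm_bounded (hf (n + 1)) (hfg n)
  have hm0 : Tendsto m atTop (𝓝 0) := by
    rw [tendsto_zero_iff_abs_tendsto_zero]
    simpa [comp_def, abs_mul] using hm.summable.tendsto_atTop_zero.abs
  have hlim : Tendsto (fun n => ∑ k ∈ range (n + 1), (-1) ^ k * m k) atTop (𝓝 (∑' i, g i)) :=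
    tendsto_iff_dist_tendsto_zero.2 <| squeeze_zero (fun _ => dist_nonneg) hdist <|
      hm0.comp (tendsto_add_atTop_nat 1)
  have hM := hm.tendsto_sum_nat.comp (tendsto_add_atTop_nat 1)
  rw [tendsto_nhds_unique hM hlim]
  exact hg.hasSum

end Bonferroni

section ExactSequences

variable {V C B Y : Type*} [AddCommGroup V] [AddCommGroup C] [AddCommGroup B] [AddCommGroup Y]
  {ι : V →+ C} {π : C →+ B}

lemma exists_comp_eq_of_exact_of_injective (hexact : Exact ι π) (hι : Injective ι) {u : Y →+ C}
    (hu : π.comp u = 0) : ∃ f : Y →+ V, ι.comp f = u := by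
  have hmem (y : Y) : u y ∈ ι.range := (hexact (u y)).1 (DFunLike.congr_fun hu y)
  refine ⟨(AddMonoidHom.ofInjective hι).symm.toAddMonoidHom.comp (u.codRestrict ι.range hmem), ?_⟩
  ext y
  exact AddMonoidHom.apply_ofInjective_symm hι ⟨u y, hmem y⟩

lemma exists_comp_eq_of_exact_of_surjective (hexact : Exact ι π) (hπ : Surjective π) {u : C →+ Y}
    (hu : u.comp ι = 0) : ∃ f : B →+ Y, f.comp π = u := by
  refine ⟨π.liftOfSurjective hπ ⟨u, fun c hc => ?_⟩, AddMonoidHom.liftOfRightInverse_comp ..⟩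
  obtain ⟨v, rfl⟩ := (hexact c).1 hc
  exact DFunLike.congr_fun hu v

lemma card_eq_card_mul_card_of_exact (hexact : Exact ι π) (hι : Injective ι) (hπ : Surjective π) :
    Nat.card C = Nat.card B * Nat.card V := by
  have hker : π.ker = ι.range := AddSubgroup.ext hexact
  rw [← π.ker.index_mul_card, AddSubgroup.index_ker, AddMonoidHom.range_eq_top.2 hπ,
    AddSubgroup.card_top, hker, Nat.card_congr (AddMonoidHom.ofInjective hι).toEquiv]

end ExactSequences

section FiberProduct

variable {Q B X V : Type*} [AddCommGroup Q] [AddCommGroup B] [AddCommGroup X] [AddCommGroup V]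

/-- The fibre product `Q ×_B X`, as a subgroup of `Q × X`. -/
def fiberProd (j : Q →+ B) (φ : X →+ B) : AddSubgroup (Q × X) :=
  (j.comp (AddMonoidHom.fst Q X)).eqLocus (φ.comp (AddMonoidHom.snd Q X))

namespace fiberProd

variable (j : Q →+ B) (φ : X →+ B)

/-- The projection `Q ×_B X → Q`. -/
def fst : fiberProd j φ →+ Q := (AddMonoidHom.fst Q X).comp (fiberProd j φ).subtype

/-- The projection `Q ×_B X → X`. -/
def snd : fiberProd j φ →+ X := (AddMonoidHom.snd Q X).comp (fiberProd j φ).subtype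

/-- The inclusion `q ↦ (q, 0)` of the kernel of `j`. -/
def inl : j.ker →+ fiberProd j φ :=
  ((AddMonoidHom.inl Q X).comp j.ker.subtype).codRestrict _ fun q =>
    (AddMonoidHom.mem_ker.1 q.2).trans φ.map_zero.symm

/-- The inclusion `x ↦ (0, x)` of the kernel of `φ`. -/
def inr : φ.ker →+ fiberProd j φ :=
  ((AddMonoidHom.inr Q X).comp φ.ker.subtype).codRestrict _ fun x =>
    j.map_zero.trans (AddMonoidHom.mem_ker.1 x.2).symm

lemma comp_fst : j.comp (fst j φ) = φ.comp (snd j φ) := AddMonoidHom.ext fun y => y.2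

variable {j} in
lemma snd_surjective (hj : Surjective j) : Surjective (snd j φ) := fun x =>
  let ⟨q, hq⟩ := hj (φ x)
  ⟨⟨(q, x), hq⟩, rfl⟩

lemma exact_inl_snd : Exact (inl j φ) (snd j φ) := by
  rintro ⟨⟨q, x⟩, hqx⟩
  refine ⟨?_, ?_⟩
  · rintro (rfl : x = 0)
    exact ⟨⟨q, hqx.trans φ.map_zero⟩, rfl⟩
  · rintro ⟨y, hy⟩
    rw [← hy]
    rfl

variable {j φ} (σ : Q →+ X) (hσ : φ.comp σ = j)

/-- The section `q ↦ (q, σ q)` of `fst` defined by a lift `σ` of `j` through `φ`. -/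
def graph : Q →+ fiberProd j φ :=
  ((AddMonoidHom.id Q).prod σ).codRestrict _ fun q => (DFunLike.congr_fun hσ q).symm

include hσ in
lemma snd_sub_comp_fst_mem_ker (y : fiberProd j φ) :
    (snd j φ - σ.comp (fst j φ)) y ∈ φ.ker := by
  rw [AddMonoidHom.mem_ker, ← AddMonoidHom.comp_apply, AddMonoidHom.comp_sub, ← comp_fst,
    ← AddMonoidHom.comp_assoc, hσ, sub_self, AddMonoidHom.zero_apply]

/-- The retraction `(q, x) ↦ x - σ q` of `inr` defined by a lift `σ` of `j` through `φ`. -/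
def retraction : fiberProd j φ →+ φ.ker :=
  (snd j φ - σ.comp (fst j φ)).codRestrict φ.ker (snd_sub_comp_fst_mem_ker σ hσ)

lemma graph_fst_add_inr_retraction (y : fiberProd j φ) :
    graph σ hσ (fst j φ y) + inr j φ (retraction σ hσ y) = y :=
  Subtype.ext <| Prod.ext (add_zero _) (add_sub_cancel _ _)

lemma retraction_inr (x : φ.ker) : retraction σ hσ (inr j φ x) = x :=
  Subtype.ext <| (congrArg _ σ.map_zero).trans (sub_zero _)

lemma retraction_graph (q : Q) : retraction σ hσ (graph σ hσ q) = 0 :=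
  Subtype.ext <| sub_self (σ q)

lemma fst_inr (x : φ.ker) : fst j φ (inr j φ x) = 0 := rfl

lemma fst_graph (q : Q) : fst j φ (graph σ hσ q) = q := rfl

/-- A lift `σ` of `j` through `φ` splits `Q ×_B X` as `Q × ker φ`. -/
def homEquivOfLift : {f : fiberProd j φ →+ V // Surjective (f.comp (inr j φ))} ≃
    (Q →+ V) × {g : φ.ker →+ V // Surjective g} where
  toFun f := (f.1.comp (graph σ hσ), ⟨f.1.comp (inr j φ), f.2⟩)
  invFun t := ⟨t.1.comp (fst j φ) + t.2.1.comp (retraction σ hσ), by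
    convert t.2.2
    ext x
    simp [retraction_inr, fst_inr]⟩
  left_inv f := Subtype.ext <| AddMonoidHom.ext fun y => by
    simp [← map_add, graph_fst_add_inr_retraction]
  right_inv t := by
    ext x
    · simp [retraction_graph, fst_graph]
    · simp [retraction_inr, fst_inr]

end fiberProd

end FiberProduct

section PushoutExtension

variable {Q B X V : Type*} [AddCommGroup Q] [AddCommGroup B] [AddCommGroup X] [AddCommGroup V]

/-- The extension of `B` by `V` obtained from `0 → ker j → Q → B → 0` by pushing out along
`h : ker j → V`. -/
def PushoutExt (j : Q →+ B) (h : j.ker →+ V) : Type _ :=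
  (Q × V) ⧸ (j.ker.subtype.prod (-h)).range

namespace PushoutExt

variable (j : Q →+ B) (h : j.ker →+ V)

instance : AddCommGroup (PushoutExt j h) :=
  inferInstanceAs (AddCommGroup ((Q × V) ⧸ (j.ker.subtype.prod (-h)).range))

/-- The quotient map `Q × V → PushoutExt j h`. -/
def mk : Q × V →+ PushoutExt j h := QuotientAddGroup.mk' _

/-- The canonical map from `Q`. -/
def inl : Q →+ PushoutExt j h := (mk j h).comp (AddMonoidHom.inl Q V)

/-- The inclusion of `V` as the kernel of `proj`. -/
def inr : V →+ PushoutExt j h := (mk j h).comp (AddMonoidHom.inr Q V)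

/-- The projection of the extension onto `B`. -/
def proj : PushoutExt j h →+ B :=
  QuotientAddGroup.lift _ (j.comp (AddMonoidHom.fst Q V)) <| by
    rintro _ ⟨q, rfl⟩
    exact q.2

lemma mk_surjective : Surjective (mk j h) := QuotientAddGroup.mk'_surjective _

lemma mk_eq_inl_add_inr (q : Q) (v : V) : mk j h (q, v) = inl j h q + inr j h v := by
  simp [inl, inr, ← map_add]

lemma proj_comp_inl : (proj j h).comp (inl j h) = j := rfl

lemma proj_comp_inr : (proj j h).comp (inr j h) = 0 := AddMonoidHom.ext fun _ => j.map_zero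

lemma inl_comp_subtype : (inl j h).comp j.ker.subtype = (inr j h).comp h := by
  ext q
  refine QuotientAddGroup.eq.2 ⟨-q, ?_⟩
  simp [AddMonoidHom.inl, AddMonoidHom.inr]

lemma inr_injective : Injective (inr j h) := by
  refine (injective_iff_map_eq_zero _).2 fun v hv => ?_
  obtain ⟨q, hq⟩ := (QuotientAddGroup.eq_zero_iff _).1 hv
  obtain ⟨hq0, hqv⟩ := Prod.ext_iff.1 hq
  obtain rfl : q = 0 := Subtype.ext hq0
  simpa using hqv.symm

lemma exact_inr_proj : Exact (inr j h) (proj j h) := by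
  refine fun c => ⟨fun hc => ?_, ?_⟩
  · obtain ⟨⟨q, v⟩, rfl⟩ := mk_surjective j h c
    have hq : q ∈ j.ker := hc
    refine ⟨h ⟨q, hq⟩ + v, ?_⟩
    rw [mk_eq_inl_add_inr, map_add, ← AddMonoidHom.comp_apply, ← inl_comp_subtype]
    rfl
  · rintro ⟨v, rfl⟩
    exact DFunLike.congr_fun (proj_comp_inr j h) v

variable {j}

lemma proj_surjective (hj : Surjective j) : Surjective (proj j h) :=
  .of_comp (g := inl j h) hj

lemma card_eq_mul (hj : Surjective j) :
    Nat.card (PushoutExt j h) = Nat.card B * Nat.card V :=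
  card_eq_card_mul_card_of_exact (exact_inr_proj j h) (inr_injective j h) (proj_surjective h hj)

lemma finite [Finite B] [Finite V] (hj : Surjective j) : Finite (PushoutExt j h) :=
  Nat.finite_of_card_ne_zero <| by
    rw [card_eq_mul h hj]
    exact mul_ne_zero Nat.card_pos.ne' Nat.card_pos.ne'

section Lifts

open fiberProd (fst snd)

variable {h} {φ : X →+ B} {ψ : X →+ PushoutExt j h} {f : fiberProd j φ →+ V}

lemma exists_comp_snd_add_eq_of_proj_comp_eq (hψ : (proj j h).comp ψ = φ) :
    ∃ f : fiberProd j φ →+ V,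
      ψ.comp (snd j φ) + (inr j h).comp f = (inl j h).comp (fst j φ) := by
  obtain ⟨f, hf⟩ := exists_comp_eq_of_exact_of_injective (exact_inr_proj j h) (inr_injective j h)
    (u := (inl j h).comp (fst j φ) - ψ.comp (snd j φ)) <| by
      rw [AddMonoidHom.comp_sub, ← AddMonoidHom.comp_assoc, ← AddMonoidHom.comp_assoc,
        proj_comp_inl, hψ, fiberProd.comp_fst, sub_self]
  exact ⟨f, by rw [hf, add_sub_cancel]⟩

lemma exists_comp_snd_add_eq_of_comp_inl_eq (hj : Surjective j)
    (hf : f.comp (fiberProd.inl j φ) = h) :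
    ∃ ψ : X →+ PushoutExt j h,
      ψ.comp (snd j φ) + (inr j h).comp f = (inl j h).comp (fst j φ) := by
  obtain ⟨ψ, hψ⟩ := exists_comp_eq_of_exact_of_surjective (fiberProd.exact_inl_snd j φ)
    (fiberProd.snd_surjective φ hj) (u := (inl j h).comp (fst j φ) - (inr j h).comp f) <| by
      rw [AddMonoidHom.sub_comp, AddMonoidHom.comp_assoc, AddMonoidHom.comp_assoc, hf,
        ← inl_comp_subtype]
      exact sub_self _
  exact ⟨ψ, by rw [hψ, sub_add_cancel]⟩

variable (hψf : ψ.comp (snd j φ) + (inr j h).comp f = (inl j h).comp (fst j φ))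

include hψf in
lemma comp_inl_eq_of_comp_snd_add_eq : f.comp (fiberProd.inl j φ) = h := by
  ext q
  refine inr_injective j h ?_
  have hq := DFunLike.congr_fun hψf (fiberProd.inl j φ q)
  have hsnd : snd j φ (fiberProd.inl j φ q) = 0 := rfl
  rw [AddMonoidHom.add_apply, AddMonoidHom.comp_apply, hsnd, map_zero, zero_add] at hq
  exact hq.trans (DFunLike.congr_fun (inl_comp_subtype j h) q)

include hψf in
lemma proj_comp_eq_of_comp_snd_add_eq (hj : Surjective j) : (proj j h).comp ψ = φ := by
  rw [← AddMonoidHom.cancel_right (fiberProd.snd_surjective φ hj)]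
  calc ((proj j h).comp ψ).comp (snd j φ)
      = (proj j h).comp (ψ.comp (snd j φ) + (inr j h).comp f) := by
        rw [AddMonoidHom.comp_add, ← AddMonoidHom.comp_assoc _ (inr j h), proj_comp_inr,
          AddMonoidHom.zero_comp, add_zero, AddMonoidHom.comp_assoc]
    _ = (proj j h).comp ((inl j h).comp (fst j φ)) := by rw [hψf]
    _ = φ.comp (snd j φ) := fiberProd.comp_fst j φ

include hψf in
lemma inr_apply_eq_neg_of_comp_snd_add_eq (x : φ.ker) :
    inr j h (f (fiberProd.inr j φ x)) = -ψ x := by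
  have hx := DFunLike.congr_fun hψf (fiberProd.inr j φ x)
  exact eq_neg_of_add_eq_zero_right (hx.trans (map_zero (inl j h)))

include hψf in
lemma surjective_iff_surjective_comp_inr (hj : Surjective j) (hφ : Surjective φ) :
    Surjective ψ ↔ Surjective (f.comp (fiberProd.inr j φ)) := by
  have hψ := DFunLike.congr_fun (proj_comp_eq_of_comp_snd_add_eq hψf hj)
  have hker := inr_apply_eq_neg_of_comp_snd_add_eq hψf
  refine ⟨fun hsurj v => ?_, fun hsurj c => ?_⟩
  · obtain ⟨x, hx⟩ := hsurj (-inr j h v)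
    have hxker : φ x = 0 := by
      rw [← hψ, AddMonoidHom.comp_apply, hx, map_neg, neg_eq_zero]
      exact DFunLike.congr_fun (proj_comp_inr j h) v
    exact ⟨⟨x, hxker⟩, inr_injective j h ((hker _).trans (by rw [hx, neg_neg]))⟩
  · obtain ⟨x, hx⟩ := hφ (proj j h c)
    have hc : proj j h (c - ψ x) = 0 := by
      rw [map_sub, ← hx, ← hψ, AddMonoidHom.comp_apply, sub_self]
    obtain ⟨v, hv⟩ := (exact_inr_proj j h _).1 hc
    obtain ⟨k, rfl⟩ := hsurj v
    refine ⟨x - k, ?_⟩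
    rw [map_sub, sub_eq_add_neg, ← hker, ← AddMonoidHom.comp_apply f, hv, add_sub_cancel]

/-- `ψ` and `f` determine each other through the equation
`ψ.comp (snd j φ) + (inr j h).comp f = (inl j h).comp (fst j φ)`. -/
theorem nonempty_surjective_lift_equiv (h : j.ker →+ V) (hj : Surjective j) (hφ : Surjective φ) :
    Nonempty ({ψ : {ψ : X →+ PushoutExt j h // Surjective ψ} // (proj j h).comp ψ.1 = φ} ≃
      {f : {f : fiberProd j φ →+ V // Surjective (f.comp (fiberProd.inr j φ))} //
        f.1.comp (fiberProd.inl j φ) = h}) := by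
  choose F hF using fun ψ : {ψ : {ψ : X →+ PushoutExt j h // Surjective ψ} //
    (proj j h).comp ψ.1 = φ} => exists_comp_snd_add_eq_of_proj_comp_eq ψ.2
  choose G hG using fun f : {f : {f : fiberProd j φ →+ V //
    Surjective (f.comp (fiberProd.inr j φ))} // f.1.comp (fiberProd.inl j φ) = h} =>
      exists_comp_snd_add_eq_of_comp_inl_eq hj f.2
  refine ⟨fun ψ => ⟨⟨F ψ, ?_⟩, comp_inl_eq_of_comp_snd_add_eq (hF ψ)⟩,
    fun f => ⟨⟨G f, ?_⟩, proj_comp_eq_of_comp_snd_add_eq (hG f) hj⟩, fun ψ => ?_, fun f => ?_⟩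
  · exact (surjective_iff_surjective_comp_inr (hF ψ) hj hφ).1 ψ.1.2
  · exact (surjective_iff_surjective_comp_inr (hG f) hj hφ).2 f.1.2
  · refine Subtype.ext <| Subtype.ext ?_
    rw [← AddMonoidHom.cancel_right (fiberProd.snd_surjective φ hj)]
    exact add_right_cancel ((hG _).trans (hF ψ).symm)
  · refine Subtype.ext <| Subtype.ext ?_
    rw [← AddMonoidHom.cancel_left (inr_injective j h)]
    exact add_left_cancel ((hF _).trans (hG f).symm)

end Lifts

end PushoutExt

end PushoutExtension

section HomCount

variable (M V : Type*) [AddCommGroup M] [Module.Finite ℤ M] [Module.Free ℤ M] [AddCommGroup V]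

lemma card_addMonoidHom_eq_pow_finrank :
    Nat.card (M →+ V) = Nat.card V ^ Module.finrank ℤ M := by
  have e : (M →+ V) ≃ (Module.Free.ChooseBasisIndex ℤ M → V) :=
    (addMonoidHomLequivInt ℤ).toEquiv.trans
      ((Module.Free.chooseBasis ℤ M).constr ℤ).symm.toEquiv
  rw [Nat.card_congr e, Nat.card_fun,
    Nat.card_eq_fintype_card (α := Module.Free.ChooseBasisIndex ℤ M),
    ← Module.finrank_eq_card_chooseBasisIndex]

lemma finite_addMonoidHom_of_free [Finite V] : Finite (M →+ V) :=
  Nat.finite_of_card_ne_zero <| by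
    rw [card_addMonoidHom_eq_pow_finrank]
    exact pow_ne_zero _ Nat.card_pos.ne'

variable {M}

lemma finite_addSubgroup_addMonoidHom [Finite V] (A : AddSubgroup M) : Finite (A →+ V) :=
  finite_addMonoidHom_of_free A.toIntSubmodule V

lemma card_addSubgroup_addMonoidHom (A : AddSubgroup M) [A.FiniteIndex] :
    Nat.card (A →+ V) = Nat.card (M →+ V) := by
  rw [card_addMonoidHom_eq_pow_finrank M, ← A.finrank_eq_of_finiteIndex]
  exact card_addMonoidHom_eq_pow_finrank A.toIntSubmodule V

end HomCount

section ExtensionCount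

universe w

variable {Q B : Type*} [AddCommGroup Q] [AddCommGroup B]

lemma exists_comp_eq_of_surjective [Module.Projective ℤ Q] {X : Type*} [AddCommGroup X]
    {φ : X →+ B} (hφ : Surjective φ) (j : Q →+ B) : ∃ σ : Q →+ X, φ.comp σ = j := by
  obtain ⟨σ, hσ⟩ :=
    Module.projective_lifting_property φ.toIntLinearMap j.toIntLinearMap hφ
  exact ⟨σ.toAddMonoidHom, AddMonoidHom.ext fun q => LinearMap.congr_fun hσ q⟩

/-- The number of pairs consisting of a surjection `φ : X → B` and a surjection `ker φ → V`. -/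
noncomputable def numSurKer (X B V : Type*) [AddCommGroup X] [AddCommGroup B] [AddCommGroup V] :
    ℕ :=
  Nat.card (Σ φ : {φ : X →+ B // Surjective φ}, {g : φ.1.ker →+ V // Surjective g})

theorem nonempty_sigma_surjective_pushoutExt_equiv [Module.Projective ℤ Q] (X V : Type*)
    [AddCommGroup X] [AddCommGroup V] {j : Q →+ B} (hj : Surjective j) :
    Nonempty ((Σ h : j.ker →+ V, {ψ : X →+ PushoutExt j h // Surjective ψ}) ≃
      (Q →+ V) × Σ φ : {φ : X →+ B // Surjective φ}, {g : φ.1.ker →+ V // Surjective g}) := by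
  let project (h : j.ker →+ V) (ψ : {ψ : X →+ PushoutExt j h // Surjective ψ}) :
      {φ : X →+ B // Surjective φ} :=
    ⟨(PushoutExt.proj j h).comp ψ.1, (PushoutExt.proj_surjective h hj).comp ψ.2⟩
  let restrict (φ : {φ : X →+ B // Surjective φ})
      (f : {f : fiberProd j φ.1 →+ V // Surjective (f.comp (fiberProd.inr j φ.1))}) :
      j.ker →+ V := f.1.comp (fiberProd.inl j φ.1)
  have hfiber (h : j.ker →+ V) (φ : {φ : X →+ B // Surjective φ}) :
      Nonempty ({ψ // project h ψ = φ} ≃ {f // restrict φ f = h}) := by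
    simp_rw [project, Subtype.ext_iff (a2 := φ)]
    exact PushoutExt.nonempty_surjective_lift_equiv h hj φ.2
  choose σ hσ using fun φ : {φ : X →+ B // Surjective φ} => exists_comp_eq_of_surjective φ.2 j
  have hswap : (Σ h, Σ φ, {f // restrict φ f = h}) ≃ Σ φ, Σ h, {f // restrict φ f = h} :=
    ⟨fun t => ⟨t.2.1, t.1, t.2.2⟩, fun t => ⟨t.2.1, t.1, t.2.2⟩, fun _ => rfl, fun _ => rfl⟩
  exact ⟨calc
    (Σ h, {ψ : X →+ PushoutExt j h // Surjective ψ})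
      ≃ Σ h, Σ φ, {ψ // project h ψ = φ} :=
        Equiv.sigmaCongrRight fun h => (Equiv.sigmaFiberEquiv (project h)).symm
    _ ≃ Σ h, Σ φ, {f // restrict φ f = h} :=
        Equiv.sigmaCongrRight fun h => Equiv.sigmaCongrRight fun φ => (hfiber h φ).some
    _ ≃ Σ φ, Σ h, {f // restrict φ f = h} := hswap
    _ ≃ Σ φ : {φ : X →+ B // Surjective φ},
          {f : fiberProd j φ.1 →+ V // Surjective (f.comp (fiberProd.inr j φ.1))} :=
        Equiv.sigmaCongrRight fun φ => Equiv.sigmaFiberEquiv (restrict φ)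
    _ ≃ Σ φ : {φ : X →+ B // Surjective φ}, (Q →+ V) × {g : φ.1.ker →+ V // Surjective g} :=
        Equiv.sigmaCongrRight fun φ => fiberProd.homEquivOfLift (σ φ) (hσ φ)
    _ ≃ _ := ((Equiv.sigmaCongrRight fun _ => Equiv.prodComm _ _).trans
        (Equiv.sigmaProdDistrib _ _).symm).trans (Equiv.prodComm _ _)⟩

theorem sum_numSur_pushoutExt [Module.Projective ℤ Q] (X V : Type*) [AddCommGroup X] [Finite X]
    [AddCommGroup V] [Finite B] [Finite V] {j : Q →+ B} [Fintype (j.ker →+ V)]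
    (hj : Surjective j) :
    ∑ h : j.ker →+ V, numSur X (PushoutExt j h) = Nat.card (Q →+ V) * numSurKer X B V := by
  have hfinite (h : j.ker →+ V) : Finite (X →+ PushoutExt j h) :=
    have := PushoutExt.finite h hj
    DFunLike.finite _
  simp_rw [numSur, numSurKer]
  rw [← Nat.card_sigma, Nat.card_congr (nonempty_sigma_surjective_pushoutExt_equiv X V hj).some,
    Nat.card_prod]

theorem hasSum_numSurKer_mul {ι : Type*} {X : ι → Type*} [∀ i, AddCommGroup (X i)]
    [∀ i, Finite (X i)] {ν : ι → ℝ} {B V : Type w} [AddCommGroup B] [AddCommGroup V] [Finite B]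
    [Finite V] {M : ℝ}
    (hmom : ∀ (A : Type w) [AddCommGroup A], Nat.card A = Nat.card B * Nat.card V →
      HasSum (fun i => (numSur (X i) A : ℝ) * ν i) M) :
    HasSum (fun i => (numSurKer (X i) B V : ℝ) * ν i) M := by
  let j : (B →₀ ℤ) →+ B := Finsupp.liftAddHom fun b => zmultiplesHom B b
  have hj : Surjective j := fun b => ⟨Finsupp.single b 1, by simp [j]⟩
  have := finite_addSubgroup_addMonoidHom V j.ker
  have := Fintype.ofFinite (j.ker →+ V)
  have hcard : (Nat.card ((B →₀ ℤ) →+ V) : ℝ) ≠ 0 := by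
    rw [← card_addSubgroup_addMonoidHom V j.ker]
    exact Nat.cast_ne_zero.2 Nat.card_pos.ne'
  have hsum := hasSum_sum fun h (_ : h ∈ univ) =>
    hmom (PushoutExt j h) (PushoutExt.card_eq_mul h hj)
  simp_rw [← sum_mul, ← Nat.cast_sum, sum_numSur_pushoutExt _ V hj, sum_const, card_univ,
    nsmul_eq_mul, ← Nat.card_eq_fintype_card, card_addSubgroup_addMonoidHom V j.ker, Nat.cast_mul,
    mul_assoc] at hsum
  exact (hasSum_mul_left_iff hcard).1 hsum

end ExtensionCount

section PRank

variable (p : ℕ) [Fact p.Prime] (K : Type*) [AddCommGroup K]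

/-- The rank of `K ⧸ pK` for finite `K`, encoded as the dimension of `Hom(K, 𝔽_p)`. -/
noncomputable def pRank : ℕ := Module.finrank (ZMod p) (K →+ ZMod p)

variable {p K}

lemma surjective_pi_iff_linearIndependent {κ : Type*} [Finite κ] (s : κ → K →+ ZMod p) :
    Surjective (AddMonoidHom.pi s) ↔ LinearIndependent (ZMod p) s := by
  cases nonempty_fintype κ
  let W : Submodule (ZMod p) (κ → ZMod p) :=
    AddSubgroup.toZModSubmodule p (AddMonoidHom.pi s).range
  have hW : Surjective (AddMonoidHom.pi s) ↔ W = ⊤ := by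
    rw [← AddMonoidHom.range_eq_top, ← map_eq_top_iff (AddSubgroup.toZModSubmodule p)]
  rw [hW, ← Submodule.dualAnnihilator_eq_bot_iff, Submodule.eq_bot_iff,
    Fintype.linearIndependent_iff, (dotProductEquiv (ZMod p) κ).symm.toEquiv.forall_congr_left]
  refine forall_congr' fun a => ?_
  have hann : dotProductEquiv (ZMod p) κ a ∈ W.dualAnnihilator ↔ ∑ i, a i • s i = 0 := by
    rw [Submodule.mem_dualAnnihilator, DFunLike.ext_iff]
    simp [W, dotProduct]
  simp [hann, funext_iff]

lemma card_linearIndependent_eq_qFalling (V : Type*) [AddCommGroup V] [Module (ZMod p) V]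
    [Finite V] (k : ℕ) :
    (Nat.card {s : Fin k → V // LinearIndependent (ZMod p) s} : ℝ) =
      qFalling p (p ^ Module.finrank (ZMod p) V) k := by
  have := Fintype.ofFinite V
  rcases le_or_gt k (Module.finrank (ZMod p) V) with hk | hk
  · rw [card_linearIndependent hk, qFalling, Nat.cast_prod,
      ← Fin.prod_univ_eq_prod_range fun i => (p : ℝ) ^ Module.finrank (ZMod p) V - (p : ℝ) ^ i]
    refine prod_congr rfl fun i _ => ?_
    rw [ZMod.card, Nat.cast_sub (Nat.pow_le_pow_right (NeZero.pos p) (i.2.le.trans hk)),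
      Nat.cast_pow, Nat.cast_pow]
  · have : IsEmpty {s : Fin k → V // LinearIndependent (ZMod p) s} :=
      ⟨fun s => hk.not_ge <| by simpa using s.2.fintype_card_le_finrank⟩
    rw [qFalling_pow_eq_zero _ hk, Nat.card_of_isEmpty, Nat.cast_zero]

theorem numSur_fin_zmod_eq_qFalling [Finite K] (k : ℕ) :
    (numSur K (Fin k → ZMod p) : ℝ) = qFalling p (p ^ pRank p K) k := by
  have : Finite (K →+ ZMod p) := DFunLike.finite _
  rw [pRank, ← card_linearIndependent_eq_qFalling, numSur]
  let e : {s : Fin k → K →+ ZMod p // LinearIndependent (ZMod p) s} ≃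
      {g : K →+ (Fin k → ZMod p) // Surjective g} :=
    { toFun s := ⟨AddMonoidHom.pi s.1, (surjective_pi_iff_linearIndependent s.1).2 s.2⟩
      invFun g := ⟨fun i => (Pi.evalAddMonoidHom _ i).comp g.1,
        (surjective_pi_iff_linearIndependent _).1 g.2⟩
      left_inv _ := rfl
      right_inv _ := rfl }
  rw [Nat.card_congr e]

lemma exists_addMonoidHom_apply_ne_zero {V : Type*} [AddCommGroup V] [Module (ZMod p) V] {x : V}
    (hx : x ≠ 0) : ∃ f : V →+ ZMod p, f x ≠ 0 :=
  let ⟨f, hf⟩ := Module.Projective.exists_dual_ne_zero (ZMod p) hx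
  ⟨f.toAddMonoidHom, hf⟩

lemma surjective_nsmul_of_subsingleton_addMonoidHom [Subsingleton (K →+ ZMod p)] :
    Surjective fun x : K => p • x := by
  let pK : AddSubgroup K := (nsmulAddMonoidHom p).range
  let : Module (ZMod p) (K ⧸ pK) := QuotientAddGroup.zmodModule fun x => ⟨x, rfl⟩
  intro x
  change x ∈ pK
  rw [← QuotientAddGroup.eq_zero_iff]
  by_contra hx
  obtain ⟨f, hf⟩ := exists_addMonoidHom_apply_ne_zero (p := p) hx
  have hzero : f.comp (QuotientAddGroup.mk' pK) = 0 := Subsingleton.elim _ _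
  exact hf (DFunLike.congr_fun hzero x)

lemma pRank_eq_zero_iff [Finite K] {n : ℕ} (hn : ∀ x : K, p ^ n • x = 0) :
    pRank p K = 0 ↔ Subsingleton K := by
  have : Finite (K →+ ZMod p) := DFunLike.finite _
  rw [pRank, Module.finrank_zero_iff]
  refine ⟨fun _ => ?_, fun _ => ⟨fun f g => AddMonoidHom.ext fun x => ?_⟩⟩
  · have hsurj : Surjective fun x : K => p ^ n • x := by
      rw [← smul_iterate]
      exact surjective_nsmul_of_subsingleton_addMonoidHom.iterate n
    refine subsingleton_of_forall_eq 0 fun x => ?_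
    obtain ⟨y, rfl⟩ := hsurj x
    exact hn y
  · rw [Subsingleton.elim x 0, map_zero, map_zero]

end PRank

section GroupBonferroni

variable {p : ℕ} [Fact p.Prime] {X B : Type*} [AddCommGroup X] [AddCommGroup B] [Finite X]

lemma numSurKer_fin_zmod_eq_sum_qFalling [Fintype {φ : X →+ B // Surjective φ}] (k : ℕ) :
    (numSurKer X B (Fin k → ZMod p) : ℝ) =
      ∑ φ : {φ : X →+ B // Surjective φ}, qFalling p (p ^ pRank p φ.1.ker) k := by
  have (φ : {φ : X →+ B // Surjective φ}) : Finite (φ.1.ker →+ (Fin k → ZMod p)) :=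
    DFunLike.finite _
  simp_rw [numSurKer, Nat.card_sigma, Nat.cast_sum, ← numSur_fin_zmod_eq_qFalling, numSur]

omit [Finite X] in
lemma card_addEquiv_eq_card_injective :
    Nat.card (X ≃+ B) = Nat.card {φ : {φ : X →+ B // Surjective φ} // Injective φ.1} :=
  Nat.card_congr
    { toFun e := ⟨⟨e.toAddMonoidHom, e.surjective⟩, e.injective⟩
      invFun φ := AddEquiv.ofBijective φ.1.1 ⟨φ.2, φ.1.2⟩
      left_inv _ := AddEquiv.ext fun _ => rfl
      right_inv _ := rfl }

lemma card_addEquiv_eq_sum_ite [Fintype {φ : X →+ B // Surjective φ}] {n : ℕ}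
    (hn : ∀ x : X, p ^ n • x = 0) :
    (Nat.card (X ≃+ B) : ℝ) =
      ∑ φ : {φ : X →+ B // Surjective φ}, if pRank p φ.1.ker = 0 then 1 else 0 := by
  have hinj (φ : {φ : X →+ B // Surjective φ}) : Injective φ.1 ↔ pRank p φ.1.ker = 0 := by
    rw [pRank_eq_zero_iff fun x : φ.1.ker => Subtype.ext (hn x), ← AddMonoidHom.ker_eq_bot_iff,
      ← not_iff_not, not_subsingleton_iff_nontrivial, AddSubgroup.nontrivial_iff_ne_bot]
  simp_rw [card_addEquiv_eq_card_injective, hinj]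
  rw [Nat.card_eq_fintype_card, Fintype.card_subtype, sum_boole]

theorem abs_sum_range_eulerCoeff_mul_numSurKer_sub_card_addEquiv_le [Finite B] {m : ℕ}
    (hm : ∀ x : X, p ^ m • x = 0) (n : ℕ) :
    |∑ k ∈ range (n + 1), (-1) ^ k * (eulerCoeff p k * numSurKer X B (Fin k → ZMod p)) -
        Nat.card (X ≃+ B)| ≤
      eulerCoeff p (n + 1) * numSurKer X B (Fin (n + 1) → ZMod p) := by
  have hp : 1 < (p : ℝ) := Nat.one_lt_cast.2 (Fact.out : p.Prime).one_lt
  have : Finite (X →+ B) := DFunLike.finite _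
  have := Fintype.ofFinite {φ : X →+ B // Surjective φ}
  simp_rw [numSurKer_fin_zmod_eq_sum_qFalling, card_addEquiv_eq_sum_ite hm, mul_sum]
  rw [sum_comm, ← sum_sub_distrib]
  exact (abs_sum_le_sum_abs _ _).trans <| sum_le_sum fun φ _ =>
    abs_sum_range_eulerCoeff_mul_qFalling_pow_sub_le hp (pRank p φ.1.ker) n

end GroupBonferroni

section Moments

lemma hasSum_of_tsum_eq_of_ne_zero {ι α : Type*} [AddCommMonoid α] [TopologicalSpace α]
    {f : ι → α} {a : α} (hf : ∑' i, f i = a) (ha : a ≠ 0) : HasSum f a := by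
  by_contra hsum
  have hnot : ¬Summable f := fun h => hsum (hf ▸ h.hasSum)
  exact ha (hf ▸ tsum_eq_zero_of_not_summable hnot)

lemma clProd_eq_tprod (p u : ℕ) :
    clProd p u = ∏' k : ℕ, (1 + -((p : ℝ) ^ u)⁻¹ / (p : ℝ) ^ (k + 1)) := by
  refine tprod_congr fun k => ?_
  have hcast : (k : ℤ) + 1 + u = (u + (k + 1) : ℕ) := by push_cast; ring
  rw [hcast, zpow_neg, zpow_natCast, pow_add, neg_div, ← sub_eq_add_neg, mul_inv, div_eq_mul_inv]

variable {p : ℕ}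

lemma hasSum_eulerCoeff_mul_inv_pow (hp : p.Prime) (u : ℕ) :
    HasSum (fun k => (-1) ^ k * (eulerCoeff p k * (((p : ℝ) ^ u)⁻¹) ^ k)) (clProd p u) := by
  have hp1 : 1 < (p : ℝ) := Nat.one_lt_cast.2 hp.one_lt
  rw [clProd_eq_tprod, ← tsum_eulerCoeff_mul_pow hp1]
  refine (summable_eulerCoeff_mul_pow hp1 _).hasSum.congr_fun fun k => ?_
  rw [neg_pow ((p : ℝ) ^ u)⁻¹, mul_left_comm]

theorem hasSum_card_addEquiv_mul [Fact p.Prime] {ι : Type*} {X : ι → Type*}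
    [∀ i, AddCommGroup (X i)] [∀ i, Finite (X i)] (hX : ∀ i, ∃ m, ∀ x : X i, p ^ m • x = 0)
    {ν : ι → ℝ} (hν : ∀ i, 0 ≤ ν i) {u : ℕ}
    (hmom : ∀ (A : Type) [AddCommGroup A], (∃ n, Nat.card A = p ^ n) →
      HasSum (fun i => (numSur (X i) A : ℝ) * ν i) ((Nat.card A : ℝ) ^ u)⁻¹)
    {B : Type} [AddCommGroup B] (hB : ∃ n, Nat.card B = p ^ n) :
    HasSum (fun i => (Nat.card (X i ≃+ B) : ℝ) * ν i)
      (((Nat.card B : ℝ) ^ u)⁻¹ * clProd p u) := by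
  obtain ⟨b, hb⟩ := hB
  have hp := (Fact.out : p.Prime)
  have : Finite B := Nat.finite_of_card_ne_zero <| by
    rw [hb]
    exact pow_ne_zero b hp.ne_zero
  have hpairs (k : ℕ) : HasSum (fun i => (numSurKer (X i) B (Fin k → ZMod p) : ℝ) * ν i)
      (((Nat.card B : ℝ) ^ u)⁻¹ * (((p : ℝ) ^ u)⁻¹) ^ k) := by
    refine hasSum_numSurKer_mul fun A _ hA => ?_
    have hcard : Nat.card A = Nat.card B * p ^ k := by simp [hA]
    convert hmom A ⟨b + k, by rw [hcard, hb, pow_add]⟩ using 1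
    rw [hcard, Nat.cast_mul, Nat.cast_pow, mul_pow, mul_inv, inv_pow, pow_right_comm]
  refine hasSum_of_abs_sum_range_sub_le (fun k => (hpairs k).mul_left (eulerCoeff p k)) ?_ ?_
  · refine ((hasSum_eulerCoeff_mul_inv_pow hp u).mul_left _).congr_fun fun k => ?_
    ring
  · intro n i
    obtain ⟨m, hm⟩ := hX i
    have hle := abs_sum_range_eulerCoeff_mul_numSurKer_sub_card_addEquiv_le (B := B) hm n
    simp_rw [← mul_assoc] at hle ⊢
    rw [← sum_mul, ← sub_mul, abs_mul, abs_of_nonneg (hν i)]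
    exact mul_le_mul_of_nonneg_right hle (hν i)

end Moments

section PartitionGroups

lemma sum_get_toList {α M : Type*} [AddCommMonoid M] (s : Multiset α) (f : α → M) :
    ∑ i : Fin s.toList.length, f (s.toList.get i) = (s.map f).sum := by
  rw [← Multiset.sum_map_toList]
  exact Fin.sum_univ_fun_getElem s.toList f

lemma card_clGroup (p : ℕ) (lam : Multiset ℕ+) :
    Nat.card (CLGroup p lam) = p ^ (lam.map (↑)).sum := by
  rw [CLGroup, Nat.card_pi]
  simp_rw [Nat.card_zmod]
  rw [prod_pow_eq_pow_sum, sum_get_toList lam fun a : ℕ+ => (a : ℕ)]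

variable {p : ℕ} (hp : p.Prime)

include hp in
lemma finite_clGroup (lam : Multiset ℕ+) : Finite (CLGroup p lam) :=
  Nat.finite_of_card_ne_zero <| by
    rw [card_clGroup]
    exact pow_ne_zero _ hp.ne_zero

include hp in
lemma card_zmod_pow_torsion (a j : ℕ) :
    Nat.card {x : ZMod (p ^ a) // p ^ j • x = 0} = p ^ min a j := by
  have : NeZero (p ^ a) := ⟨pow_ne_zero a hp.ne_zero⟩
  have hker := IsAddCyclic.card_nsmulAddMonoidHom_ker (G := ZMod (p ^ a)) (p ^ j)
  have hgcd : (p ^ a).gcd (p ^ j) = p ^ min a j := by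
    rcases le_total a j with h | h
    · rw [min_eq_left h, Nat.gcd_eq_left (pow_dvd_pow p h)]
    · rw [min_eq_right h, Nat.gcd_eq_right (pow_dvd_pow p h)]
  rw [Nat.card_zmod, hgcd] at hker
  exact hker

include hp in
lemma card_clGroup_torsion (lam : Multiset ℕ+) (j : ℕ) :
    Nat.card {x : CLGroup p lam // p ^ j • x = 0} =
      p ^ (lam.map fun a : ℕ+ => min (a : ℕ) j).sum := by
  let e : {x : CLGroup p lam // p ^ j • x = 0} ≃
      ∀ i, {x : ZMod (p ^ (lam.toList.get i : ℕ)) // p ^ j • x = 0} :=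
    { toFun x i := ⟨x.1 i, congrFun x.2 i⟩
      invFun y := ⟨fun i => (y i).1, funext fun i => (y i).2⟩
      left_inv _ := rfl
      right_inv _ := rfl }
  rw [Nat.card_congr e, Nat.card_pi]
  simp_rw [card_zmod_pow_torsion hp]
  rw [prod_pow_eq_pow_sum, sum_get_toList lam fun a : ℕ+ => min (a : ℕ) j]

/-- `min a j` is concave in `j`, with its only kink at `j = a`. -/
lemma sum_map_min_pred_add_sum_map_min_succ_add_count (s : Multiset ℕ+) (j : ℕ+) :
    (s.map fun a : ℕ+ => min (a : ℕ) (j - 1)).sum +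
        (s.map fun a : ℕ+ => min (a : ℕ) (j + 1)).sum + s.count j =
      2 * (s.map fun a : ℕ+ => min (a : ℕ) j).sum := by
  induction s using Multiset.induction_on with
  | empty => simp
  | cons a s ih =>
    have hkink : min (a : ℕ) (j - 1) + min (a : ℕ) (j + 1) + (if j = a then 1 else 0) =
        2 * min (a : ℕ) j := by
      have hj := j.pos
      simp_rw [← PNat.coe_inj]
      split_ifs <;> omega
    simp only [Multiset.map_cons, Multiset.sum_cons, Multiset.count_cons]
    omega

lemma eq_of_forall_sum_map_min_eq {s t : Multiset ℕ+}
    (h : ∀ j : ℕ, (s.map fun a : ℕ+ => min (a : ℕ) j).sum =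
      (t.map fun a : ℕ+ => min (a : ℕ) j).sum) : s = t := by
  ext j
  have hs := sum_map_min_pred_add_sum_map_min_succ_add_count s j
  have ht := sum_map_min_pred_add_sum_map_min_succ_add_count t j
  rw [h, h, h] at hs
  omega

include hp in
theorem eq_of_clGroup_addEquiv {lam mu : Multiset ℕ+} (e : CLGroup p lam ≃+ CLGroup p mu) :
    lam = mu := by
  refine eq_of_forall_sum_map_min_eq fun j => Nat.pow_right_injective hp.two_le ?_
  change p ^ _ = p ^ _
  rw [← card_clGroup_torsion hp, ← card_clGroup_torsion hp]
  refine Nat.card_congr (e.toEquiv.subtypeEquiv fun x => ?_)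
  rw [← map_eq_zero_iff e e.injective, map_nsmul]
  rfl

lemma exists_pow_smul_clGroup_eq_zero (lam : Multiset ℕ+) :
    ∃ m, ∀ x : CLGroup p lam, p ^ m • x = 0 :=
  ⟨_, fun x => by rw [← card_clGroup, card_nsmul_eq_zero']⟩

lemma numAut_ne_zero (A : Type*) [AddCommGroup A] [Finite A] : numAut A ≠ 0 :=
  have : Finite (A ≃+ A) := DFunLike.finite _
  Nat.card_pos.ne'

end PartitionGroups

end CohenLenstra

open CohenLenstra in
theorem cl_moments_determine_measure_general (p : ℕ) (hp : p.Prime) (u : ℕ)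
    (ν : Multiset ℕ+ → ℝ) (hν : ∀ lam, 0 ≤ ν lam)
    (hmom : ∀ (A : Type) [AddCommGroup A], (∃ n : ℕ, Nat.card A = p ^ n) →
      ∑' lam : Multiset ℕ+, (numSur (CLGroup p lam) A : ℝ) * ν lam
        = ((Nat.card A : ℝ) ^ u)⁻¹) :
    ∀ lam : Multiset ℕ+, ν lam = clMeasure p u (CLGroup p lam) := by
  intro lam
  have : Fact p.Prime := ⟨hp⟩
  have hfinite := finite_clGroup hp
  have hmoment (A : Type) [AddCommGroup A] (hA : ∃ n, Nat.card A = p ^ n) :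
      HasSum (fun mu => (numSur (CLGroup p mu) A : ℝ) * ν mu) ((Nat.card A : ℝ) ^ u)⁻¹ := by
    refine hasSum_of_tsum_eq_of_ne_zero (hmom A hA) (inv_ne_zero (pow_ne_zero u ?_))
    obtain ⟨n, hn⟩ := hA
    exact_mod_cast hn ▸ pow_ne_zero n hp.ne_zero
  have hmass := hasSum_card_addEquiv_mul exists_pow_smul_clGroup_eq_zero hν hmoment
    ⟨_, card_clGroup p lam⟩
  have hsingle := hasSum_single (f := fun mu =>
    (Nat.card (CLGroup p mu ≃+ CLGroup p lam) : ℝ) * ν mu) lam fun mu hmu => by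
      have : IsEmpty (CLGroup p mu ≃+ CLGroup p lam) := ⟨fun e => hmu (eq_of_clGroup_addEquiv hp e)⟩
      rw [Nat.card_of_isEmpty, Nat.cast_zero, zero_mul]
  have haut : (numAut (CLGroup p lam) : ℝ) ≠ 0 := Nat.cast_ne_zero.2 (numAut_ne_zero _)
  rw [clMeasure, mul_right_comm, hmass.unique hsingle]
  exact (eq_mul_inv_iff_mul_eq₀ haut).2 (mul_comm _ _)

/-- The moments determine the Cohen–Lenstra measure: if `ν` is a nonnegative function on
isomorphism classes of finite abelian `p`-groups (indexed by partitions) such that for every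
finite abelian `p`-group `A` one has `∑_B |Sur(B,A)| ν(B) = |A|^{-u}`, then `ν = μ^u`. -/
theorem cl_moments_determine_measure (p : ℕ) (hp : p.Prime) (hodd : Odd p) (u : ℕ)
    (ν : Multiset ℕ+ → ℝ) (hν : ∀ lam, 0 ≤ ν lam)
    (hmom : ∀ (A : Type) [AddCommGroup A], (∃ n : ℕ, Nat.card A = p ^ n) →
      ∑' lam : Multiset ℕ+, (numSur (CLGroup p lam) A : ℝ) * ν lam
        = ((Nat.card A : ℝ) ^ u)⁻¹) :
    ∀ lam : Multiset ℕ+, ν lam = clMeasure p u (CLGroup p lam) := by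
  exact cl_moments_determine_measure_general p hp u ν hν hmom
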